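/- arXiv:2601.13782 — 2 statements merged into one kernel-verified Lean document; each statement's English description precedes it below -/
import Mathlib

section
/- Let Ω ⊂ ℝ^d be a compact set satisfying the interior cone condition, let μ be a nicely behaving distribution on Ω, and let X_1,…,X_n be i.i.d. random points with law μ. Let h_n denote the fill distance of {X_1,…,X_n} with respect to Ω. Then h_n = O_P(n^{-1/d} (log n)^{1/d}); explicitly, for every ρ ∈ (0,1) there exist a constant K_h > 0 and an integer N_h such that for all n ≥ N_h, P( h_n > 2 K_h · n^{-1/d} (log n)^{1/d} ) ≤ ρ. -/
open MeasureTheory Metric Filter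
open scoped ENNReal RealInnerProductSpace

/-- Fill distance of the sample `X` with respect to the set `Ω`. -/
noncomputable def fillDist {d n : ℕ} (Ω : Set (EuclideanSpace ℝ (Fin d)))
    (X : Fin n → EuclideanSpace ℝ (Fin d)) : ℝ :=
  ⨆ x ∈ Ω, ⨅ i, dist x (X i)

/-- The uniform probability measure on `Ω` (normalized Lebesgue measure restricted to `Ω`). -/
noncomputable def uniformMeasure {d : ℕ} (Ω : Set (EuclideanSpace ℝ (Fin d))) :
    Measure (EuclideanSpace ℝ (Fin d)) :=
  (volume Ω)⁻¹ • volume.restrict Ω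

/-- A nicely behaving distribution on `Ω`: a probability measure comparable to the uniform
measure on `Ω`. -/
def NicelyBehaving {d : ℕ} (Ω : Set (EuclideanSpace ℝ (Fin d)))
    (μ : Measure (EuclideanSpace ℝ (Fin d))) : Prop :=
  IsProbabilityMeasure μ ∧
    ∃ c C : ℝ≥0∞, 0 < c ∧ c ≤ C ∧ C < ⊤ ∧
      c • uniformMeasure Ω ≤ μ ∧ μ ≤ C • uniformMeasure Ω

/-- Interior cone condition for `Ω ⊆ ℝ^d`. -/
def InteriorConeCondition {d : ℕ} (Ω : Set (EuclideanSpace ℝ (Fin d))) : Prop :=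
  ∃ θ : ℝ, θ ∈ Set.Ioo 0 (Real.pi / 2) ∧ ∃ r : ℝ, 0 < r ∧
    ∀ x ∈ Ω, ∃ ξ : EuclideanSpace ℝ (Fin d), ‖ξ‖ = 1 ∧
      {p | ∃ y : EuclideanSpace ℝ (Fin d), ‖y‖ = 1 ∧ Real.cos θ ≤ ⟪y, ξ⟫ ∧
        ∃ l : ℝ, l ∈ Set.Icc 0 r ∧ p = x + l • y} ⊆ Ω

/-!
A packing argument shows that a probability measure giving every ball of radius `t / 2` centred in
`Ω` mass at least `m` allows a `t`-net of `Ω` with at most `1 / m` points. If every `t`-ball around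
the net catches a sample point, then the fill distance is at most `2 * t`. A ball of mass `q` is
missed by all `n` samples with probability at most `exp (-n * q)`, so a union bound gives
`P (h_n > 2 * t) ≤ exp (-n * q) / m`. The interior cone condition makes `m` and `q` of order
`t ^ d`: the cone of half-angle `θ` contains the ball of radius `τ * sin θ` around the point of its
axis at distance `τ` from the apex. Choosing `t` with `q = log n / n` bounds the probability by
a multiple of `1 / log n`.
-/

open scoped NNReal Topology

section CoveringRadius

variable {E ι : Type*} [PseudoMetricSpace E] {Ω N : Set E} {X : ι → E} {t : ℝ}

/-- The fill distance of a family of points `X` with respect to `Ω`, in an arbitrary pseudometric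
space; `fillDist` is the case of finite samples in `ℝ^d`. It takes the junk value `0` if `ι` is
empty or the distances to `X` are unbounded on `Ω`. -/
noncomputable def coveringRadius (Ω : Set E) (X : ι → E) : ℝ :=
  ⨆ x ∈ Ω, ⨅ i, dist x (X i)

theorem coveringRadius_le (ht : 0 ≤ t) (h : ∀ x ∈ Ω, ∃ i, dist x (X i) ≤ t) :
    coveringRadius Ω X ≤ t := by
  refine Real.iSup_le (fun x => Real.iSup_le (fun hx => ?_) ht) ht
  obtain ⟨i, hi⟩ := h x hx
  exact ciInf_le_of_le ⟨0, Set.forall_mem_range.2 fun _ => dist_nonneg⟩ i hi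

theorem coveringRadius_le_add_of_isCover {ε : ℝ≥0} (ht : 0 ≤ t) (hN : IsCover ε Ω N)
    (hX : ∀ y ∈ N, ∃ i, dist y (X i) ≤ t) : coveringRadius Ω X ≤ ε + t := by
  refine coveringRadius_le (by positivity) fun x hx => ?_
  obtain ⟨y, hy, hxy⟩ := Set.mem_iUnion₂.1 (isCover_iff_subset_iUnion_closedBall.1 hN hx)
  obtain ⟨i, hi⟩ := hX y hy
  exact ⟨i, (dist_triangle x y (X i)).trans (add_le_add hxy hi)⟩

end CoveringRadius

section PackingNumber

variable {E : Type*} [PseudoMetricSpace E] [MeasurableSpace E] [OpensMeasurableSpace E]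
  {μ : Measure E} {Ω N : Set E} {ε : ℝ≥0} {m : ℝ≥0∞}

theorem encard_mul_le_measure_univ_of_isSeparated (hN : IsSeparated ε N)
    (hm : ∀ x ∈ N, m ≤ μ (closedBall x (ε / 2))) : (N.encard : ℝ≥0∞) * m ≤ μ Set.univ := by
  have hdisj : Pairwise (Function.onFun Disjoint fun x : N => closedBall (x : E) (ε / 2)) := by
    intro x y hxy
    have hlt : (ε : ℝ≥0∞) < edist (x : E) y := hN x.2 y.2 (Subtype.coe_ne_coe.2 hxy)
    rw [edist_nndist, ENNReal.coe_lt_coe] at hlt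
    refine closedBall_disjoint_closedBall ?_
    rw [add_halves]
    exact_mod_cast hlt
  calc (N.encard : ℝ≥0∞) * m = ∑' _ : N, m := (ENNReal.tsum_set_const _ _).symm
    _ ≤ ∑' x : N, μ (closedBall x (ε / 2)) := ENNReal.tsum_le_tsum fun x => hm x x.2
    _ ≤ μ (⋃ x : N, closedBall x (ε / 2)) :=
        tsum_meas_le_meas_iUnion_of_disjoint μ (fun _ => measurableSet_closedBall) hdisj
    _ ≤ μ Set.univ := measure_mono (Set.subset_univ _)

theorem packingNumber_mul_le_measure_univ (hm : ∀ x ∈ Ω, m ≤ μ (closedBall x (ε / 2))) :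
    (packingNumber ε Ω : ℝ≥0∞) * m ≤ μ Set.univ := by
  simp only [packingNumber, ENat.toENNReal_iSup, ENNReal.iSup_mul, iSup_le_iff]
  exact fun N hNΩ hN => encard_mul_le_measure_univ_of_isSeparated hN fun x hx => hm x (hNΩ hx)

theorem exists_isCover_encard_mul_le_measure_univ [IsFiniteMeasure μ] (hm₀ : m ≠ 0)
    (hm : ∀ x ∈ Ω, m ≤ μ (closedBall x (ε / 2))) :
    ∃ N ⊆ Ω, N.Finite ∧ IsCover ε Ω N ∧ (N.encard : ℝ≥0∞) * m ≤ μ Set.univ := by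
  have hcard : (coveringNumber ε Ω : ℝ≥0∞) * m ≤ μ Set.univ := calc
    _ ≤ (packingNumber ε Ω : ℝ≥0∞) * m := by gcongr; exact coveringNumber_le_packingNumber ε Ω
    _ ≤ μ Set.univ := packingNumber_mul_le_measure_univ hm
  have hfin : coveringNumber ε Ω ≠ ⊤ := by
    intro htop
    rw [htop, ENat.toENNReal_top, ENNReal.top_mul hm₀] at hcard
    exact measure_ne_top μ _ (top_le_iff.1 hcard)
  obtain ⟨N, hNΩ, hNfin, hN, hNcard⟩ := exists_set_encard_eq_coveringNumber hfin
  exact ⟨N, hNΩ, hNfin, hN, hNcard ▸ hcard⟩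

end PackingNumber

section RandomCovering

variable {E ι : Type*} [Fintype ι] [MeasurableSpace E] {μ : Measure E} [IsProbabilityMeasure μ]

theorem measure_pi_univ_pi_compl_le_exp {A : Set E} (hA : MeasurableSet A) :
    Measure.pi (fun _ : ι => μ) (Set.univ.pi fun _ => Aᶜ)
      ≤ ENNReal.ofReal (Real.exp (-(Fintype.card ι * μ.real A))) := calc
  _ = ENNReal.ofReal (1 - μ.real A) ^ Fintype.card ι := by
    rw [Measure.pi_pi, Finset.prod_const, Finset.card_univ, ← probReal_compl_eq_one_sub hA,
      ofReal_measureReal]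
  _ ≤ ENNReal.ofReal (Real.exp (-μ.real A)) ^ Fintype.card ι := by
    gcongr
    exact Real.one_sub_le_exp_neg _
  _ = ENNReal.ofReal (Real.exp (-(Fintype.card ι * μ.real A))) := by
    rw [← ENNReal.ofReal_pow (Real.exp_pos _).le, ← Real.exp_nat_mul, mul_neg]

variable [PseudoMetricSpace E] [OpensMeasurableSpace E] {Ω N : Set E} {ε : ℝ≥0} {q : ℝ}

theorem measure_pi_lt_coveringRadius_le_of_isCover (hNcount : N.Countable) (hN : IsCover ε Ω N)
    (hq : ∀ y ∈ N, q ≤ μ.real (closedBall y ε)) :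
    Measure.pi (fun _ : ι => μ) {X | 2 * ε < coveringRadius Ω X}
      ≤ N.encard * ENNReal.ofReal (Real.exp (-(Fintype.card ι * q))) := by
  have hsub : {X : ι → E | 2 * ε < coveringRadius Ω X} ⊆
      ⋃ y ∈ N, Set.univ.pi fun _ => (closedBall y ε)ᶜ := by
    intro X hX
    contrapose! hX
    have hhit : ∀ y ∈ N, ∃ i, dist y (X i) ≤ ε := by
      simpa [dist_comm] using hX
    exact not_lt.2 ((coveringRadius_le_add_of_isCover ε.2 hN hhit).trans_eq (two_mul _).symm)
  calc _ ≤ Measure.pi (fun _ : ι => μ) (⋃ y ∈ N, Set.univ.pi fun _ => (closedBall y ε)ᶜ) :=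
        measure_mono hsub
    _ ≤ ∑' y : N, Measure.pi (fun _ : ι => μ) (Set.univ.pi fun _ => (closedBall (y : E) ε)ᶜ) :=
        measure_biUnion_le _ hNcount _
    _ ≤ ∑' _ : N, ENNReal.ofReal (Real.exp (-(Fintype.card ι * q))) := by
        refine ENNReal.tsum_le_tsum fun y => ?_
        refine (measure_pi_univ_pi_compl_le_exp measurableSet_closedBall).trans ?_
        gcongr
        exact hq y y.2
    _ = N.encard * ENNReal.ofReal (Real.exp (-(Fintype.card ι * q))) :=
        ENNReal.tsum_set_const _ _

theorem measure_pi_lt_coveringRadius_le {m : ℝ≥0∞} (hm₀ : m ≠ 0)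
    (hm : ∀ x ∈ Ω, m ≤ μ (closedBall x (ε / 2))) (hq : ∀ x ∈ Ω, q ≤ μ.real (closedBall x ε)) :
    Measure.pi (fun _ : ι => μ) {X | 2 * ε < coveringRadius Ω X}
      ≤ m⁻¹ * ENNReal.ofReal (Real.exp (-(Fintype.card ι * q))) := by
  obtain ⟨N, hNΩ, hNfin, hN, hNcard⟩ := exists_isCover_encard_mul_le_measure_univ hm₀ hm
  rw [measure_univ, ← ENNReal.le_inv_iff_mul_le] at hNcard
  refine (measure_pi_lt_coveringRadius_le_of_isCover hNfin.countable hN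
    fun y hy => hq y (hNΩ hy)).trans ?_
  gcongr

end RandomCovering

section LowerAhlforsRegular

variable {E : Type*} [PseudoMetricSpace E] [MeasurableSpace E] {μ ν : Measure E} {Ω : Set E} {s : ℝ}

/-- Lower Ahlfors `s`-regularity of `μ` on `Ω`: small balls of radius `t` centred in `Ω` have
measure at least of order `t ^ s`. Nothing is asked of balls centred outside `Ω`. -/
def LowerAhlforsRegular (μ : Measure E) (Ω : Set E) (s : ℝ) : Prop :=
  ∃ a > 0, ∃ r > 0, ∀ x ∈ Ω, ∀ t ∈ Set.Ioc 0 r, ENNReal.ofReal (a * t ^ s) ≤ μ (closedBall x t)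

theorem LowerAhlforsRegular.mono (h : LowerAhlforsRegular μ Ω s) (hμν : μ ≤ ν) :
    LowerAhlforsRegular ν Ω s := by
  obtain ⟨a, ha, r, hr, hball⟩ := h
  exact ⟨a, ha, r, hr, fun x hx t ht => (hball x hx t ht).trans (hμν _)⟩

theorem LowerAhlforsRegular.const_smul (h : LowerAhlforsRegular μ Ω s) {c : ℝ≥0∞} (hc : c ≠ 0) :
    LowerAhlforsRegular (c • μ) Ω s := by
  obtain ⟨a, ha, r, hr, hball⟩ := h
  obtain ⟨k, hk₀, hkc⟩ := ENNReal.lt_iff_exists_nnreal_btwn.1 (pos_iff_ne_zero.2 hc)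
  refine ⟨k * a, mul_pos (by exact_mod_cast hk₀) ha, r, hr, fun x hx t ht => ?_⟩
  rw [mul_assoc, ENNReal.ofReal_mul k.coe_nonneg, ENNReal.ofReal_coe_nnreal]
  exact mul_le_mul' hkc.le (hball x hx t ht)

theorem measure_pi_lt_coveringRadius_le_of_ofReal_le {ι : Type*} [Fintype ι]
    [OpensMeasurableSpace E] [IsProbabilityMeasure μ] {a r t : ℝ} (ha : 0 < a)
    (hball : ∀ x ∈ Ω, ∀ t ∈ Set.Ioc 0 r, ENNReal.ofReal (a * t ^ s) ≤ μ (closedBall x t))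
    (ht : t ∈ Set.Ioc 0 r) :
    Measure.pi (fun _ : ι => μ) {X | 2 * t < coveringRadius Ω X}
      ≤ ENNReal.ofReal (2 ^ s / (a * t ^ s) * Real.exp (-(Fintype.card ι * (a * t ^ s)))) := by
  obtain ⟨ht₀, htr⟩ := ht
  have hhalf : 0 < a * (t / 2) ^ s := by positivity
  have hbound := measure_pi_lt_coveringRadius_le (ι := ι) (ε := ⟨t, ht₀.le⟩)
    (ENNReal.ofReal_pos.2 hhalf).ne'
    (fun x hx => hball x hx (t / 2) ⟨half_pos ht₀, (half_le_self ht₀.le).trans htr⟩)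
    (fun x hx => (ENNReal.ofReal_le_iff_le_toReal (measure_ne_top μ _)).1 (hball x hx t ⟨ht₀, htr⟩))
  rwa [← ENNReal.ofReal_inv_of_pos hhalf, ← ENNReal.ofReal_mul (by positivity),
    Real.div_rpow ht₀.le zero_le_two, mul_div_assoc', inv_div] at hbound

end LowerAhlforsRegular

section Rate

theorem rpow_one_div_mul_rpow_neg_one_div_mul_rpow_one_div {x y z : ℝ} (hx : 0 ≤ x) (hy : 0 ≤ y)
    (hz : 0 ≤ z) (s : ℝ) :
    x ^ (1 / s) * (y ^ (-1 / s) * z ^ (1 / s)) = (x * (z / y)) ^ (1 / s) := by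
  rw [Real.mul_rpow hx (by positivity), Real.div_rpow hz hy, neg_div, Real.rpow_neg hy]
  ring

theorem tendsto_log_div_self_natCast_atTop :
    Tendsto (fun n : ℕ => Real.log n / n) atTop (𝓝 0) :=
  Real.isLittleO_log_id_atTop.tendsto_div_nhds_zero.comp tendsto_natCast_atTop_atTop

end Rate

section Corkscrew

/-- The interior corkscrew condition with relative radius `κ`, up to scale `r`. -/
def InteriorCorkscrew {E : Type*} [PseudoMetricSpace E] (Ω : Set E) : Prop :=
  ∃ κ > 0, ∃ r > 0, ∀ x ∈ Ω, ∀ t ∈ Set.Ioc 0 r,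
    ∃ y, closedBall y (κ * t) ⊆ closedBall x t ∩ Ω

theorem InteriorCorkscrew.lowerAhlforsRegular_restrict {E : Type*} [NormedAddCommGroup E]
    [NormedSpace ℝ E] [FiniteDimensional ℝ E] [MeasurableSpace E] [BorelSpace E] {Ω : Set E}
    (hΩ : InteriorCorkscrew Ω) (ν : Measure E) [ν.IsAddHaarMeasure] :
    LowerAhlforsRegular (ν.restrict Ω) Ω (Module.finrank ℝ E) := by
  obtain ⟨κ, hκ, r, hr, hball⟩ := hΩ
  have hunit : ν (ball (0 : E) 1) ≠ ∞ := measure_ball_lt_top.ne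
  refine ⟨κ ^ Module.finrank ℝ E * ν.real (ball (0 : E) 1), mul_pos (by positivity)
    (ENNReal.toReal_pos (measure_ball_pos ν 0 one_pos).ne' hunit), r, hr, fun x hx t ht => ?_⟩
  obtain ⟨y, hy⟩ := hball x hx t ht
  have ht₀ : 0 ≤ t := ht.1.le
  calc _ = ENNReal.ofReal ((κ * t) ^ Module.finrank ℝ E) * ν (ball (0 : E) 1) := by
        rw [← ofReal_measureReal hunit, ← ENNReal.ofReal_mul (by positivity), Real.rpow_natCast]
        congr 1
        ring
    _ = ν (closedBall y (κ * t)) := (Measure.addHaar_closedBall ν y (by positivity)).symm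
    _ ≤ ν (closedBall x t ∩ Ω) := measure_mono hy
    _ = ν.restrict Ω (closedBall x t) := (Measure.restrict_apply measurableSet_closedBall).symm

end Corkscrew

section Cone

variable {V : Type*} [NormedAddCommGroup V] [InnerProductSpace ℝ V] {x ξ v : V} {θ r t : ℝ}

/-- The truncated cone `C(x, ξ, θ, r)` with apex `x`, axis `ξ`, half-angle `θ` and radius `r`. -/
def truncatedCone (x ξ : V) (θ r : ℝ) : Set V :=
  {p | ∃ y : V, ‖y‖ = 1 ∧ Real.cos θ ≤ ⟪y, ξ⟫ ∧ ∃ l : ℝ, l ∈ Set.Icc 0 r ∧ p = x + l • y}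

theorem add_mem_truncatedCone (hξ : ‖ξ‖ = 1) (hvr : ‖v‖ ≤ r) (hv : Real.cos θ * ‖v‖ ≤ ⟪v, ξ⟫) :
    x + v ∈ truncatedCone x ξ θ r := by
  rcases eq_or_ne v 0 with rfl | hv₀
  · exact ⟨ξ, hξ, by simp [hξ, Real.cos_le_one], 0, by simpa using hvr, by simp⟩
  · have hpos : 0 < ‖v‖ := norm_pos_iff.2 hv₀
    refine ⟨‖v‖⁻¹ • v, norm_smul_inv_norm hv₀, ?_, ‖v‖, ⟨hpos.le, hvr⟩, ?_⟩
    · rwa [real_inner_smul_left, ← div_eq_inv_mul, le_div_iff₀ hpos]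
    · rw [smul_inv_smul₀ hpos.ne']

theorem cos_mul_norm_le_inner_of_norm_sub_smul_le {τ : ℝ} (hτ : 0 < τ) (hξ : ‖ξ‖ = 1)
    (hv : ‖v - τ • ξ‖ ≤ τ * Real.sin θ) : Real.cos θ * ‖v‖ ≤ ⟪v, ξ⟫ := by
  -- Expanding the square, then AM-GM: `2 τ ⟪v, ξ⟫ ≥ ‖v‖² + τ² cos² θ ≥ 2 τ cos θ ‖v‖`.
  have hexpand : ‖v - τ • ξ‖ ^ 2 = ‖v‖ ^ 2 - 2 * (τ * ⟪v, ξ⟫) + τ ^ 2 := by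
    rw [norm_sub_sq_real, real_inner_smul_right, norm_smul, hξ, mul_one, Real.norm_eq_abs, sq_abs]
  have hsq : ‖v - τ • ξ‖ ^ 2 ≤ τ ^ 2 * Real.sin θ ^ 2 := by
    rw [← mul_pow]
    gcongr
  have hamgm := two_mul_le_add_sq ‖v‖ (τ * Real.cos θ)
  refine le_of_mul_le_mul_left ?_ (mul_pos two_pos hτ)
  linear_combination hamgm + hsq - hexpand + τ ^ 2 * Real.sin_sq_add_cos_sq θ

theorem closedBall_add_smul_subset_truncatedCone (hξ : ‖ξ‖ = 1) (ht : t ∈ Set.Ioc 0 r) :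
    closedBall (x + (t / 2) • ξ) (t / 2 * Real.sin θ) ⊆ closedBall x t ∩ truncatedCone x ξ θ r := by
  obtain ⟨ht₀, htr⟩ := ht
  have hcenter : dist (x + (t / 2) • ξ) x = t / 2 := by
    rw [dist_self_add_left, norm_smul, hξ, mul_one, Real.norm_of_nonneg (half_pos ht₀).le]
  have hball : closedBall (x + (t / 2) • ξ) (t / 2 * Real.sin θ) ⊆ closedBall x t := by
    refine closedBall_subset_closedBall' ?_
    rw [hcenter]
    nlinarith [Real.sin_le_one θ]
  intro p hp
  refine ⟨hball hp, ?_⟩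
  rw [← add_sub_cancel x p]
  refine add_mem_truncatedCone hξ ((mem_closedBall_iff_norm.1 (hball hp)).trans htr)
    (cos_mul_norm_le_inner_of_norm_sub_smul_le (half_pos ht₀) hξ ?_)
  rwa [sub_sub, ← mem_closedBall_iff_norm]

theorem InteriorConeCondition.interiorCorkscrew {d : ℕ} {Ω : Set (EuclideanSpace ℝ (Fin d))}
    (hΩ : InteriorConeCondition Ω) : InteriorCorkscrew Ω := by
  obtain ⟨θ, ⟨hθ₀, hθ⟩, r, hr, hcone⟩ := hΩ
  have hsin : 0 < Real.sin θ := Real.sin_pos_of_pos_of_lt_pi hθ₀ (by linarith)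
  refine ⟨Real.sin θ / 2, half_pos hsin, r, hr, fun x hx t ht => ?_⟩
  obtain ⟨ξ, hξ, hsub⟩ := hcone x hx
  refine ⟨x + (t / 2) • ξ, ?_⟩
  rw [div_mul_comm]
  exact (closedBall_add_smul_subset_truncatedCone hξ ht).trans (Set.inter_subset_inter_right _ hsub)

theorem NicelyBehaving.lowerAhlforsRegular {d : ℕ} {Ω : Set (EuclideanSpace ℝ (Fin d))}
    {μ : Measure (EuclideanSpace ℝ (Fin d))} (hμ : NicelyBehaving Ω μ)
    (hΩ : InteriorConeCondition Ω) (hvol : volume Ω ≠ ∞) : LowerAhlforsRegular μ Ω d := by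
  obtain ⟨-, c, -, hc, -, -, hcμ, -⟩ := hμ
  have hvolume : LowerAhlforsRegular (volume.restrict Ω) Ω d := by
    have hfinrank := hΩ.interiorCorkscrew.lowerAhlforsRegular_restrict volume
    rwa [finrank_euclideanSpace_fin] at hfinrank
  have hunif : LowerAhlforsRegular (uniformMeasure Ω) Ω d :=
    hvolume.const_smul (ENNReal.inv_ne_zero.2 hvol)
  exact (hunif.const_smul hc.ne').mono hcμ

end Cone

/-- Lower regularity of the probability measure `μ` makes `Ω` totally bounded, so the covering
radius is a genuine supremum for every nonempty sample. -/
theorem fillDist_rate_general {E : Type*} [PseudoMetricSpace E] [MeasurableSpace E]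
    [OpensMeasurableSpace E] {μ : Measure E} [IsProbabilityMeasure μ] {Ω : Set E} {s : ℝ}
    (hs : 0 < s) (hμ : LowerAhlforsRegular μ Ω s) :
    ∃ K > 0, Tendsto (fun n : ℕ => (Measure.pi fun _ : Fin n => μ)
      {X | 2 * K * ((n : ℝ) ^ (-1 / s) * Real.log n ^ (1 / s)) < coveringRadius Ω X})
      atTop (𝓝 0) := by
  obtain ⟨a, ha, r, hr, hball⟩ := hμ
  let t (n : ℕ) : ℝ := (a⁻¹ * (Real.log n / n)) ^ (1 / s)
  have ht_lim : Tendsto t atTop (𝓝 0) := by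
    have := (tendsto_log_div_self_natCast_atTop.const_mul a⁻¹).rpow_const
      (p := 1 / s) (Or.inr (by positivity))
    rwa [mul_zero, Real.zero_rpow (by positivity)] at this
  have hbound_lim : Tendsto (fun n : ℕ => ENNReal.ofReal (2 ^ s / Real.log n)) atTop (𝓝 0) := by
    rw [← ENNReal.ofReal_zero]
    exact ENNReal.tendsto_ofReal <|
      (Real.tendsto_log_atTop.comp tendsto_natCast_atTop_atTop).const_div_atTop _
  refine ⟨a⁻¹ ^ (1 / s), by positivity, tendsto_of_tendsto_of_tendsto_of_le_of_le'
    tendsto_const_nhds hbound_lim (Eventually.of_forall fun _ => zero_le) ?_⟩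
  filter_upwards [ht_lim.eventually_le_const hr, eventually_ge_atTop 2] with n htr hn
  have hn₀ : (0 : ℝ) < n := by positivity
  have hlog : 0 < Real.log n := Real.log_pos (by exact_mod_cast hn)
  have hmass : a * t n ^ s = Real.log n / n := by
    rw [← Real.rpow_mul (by positivity), one_div_mul_cancel hs.ne', Real.rpow_one,
      mul_inv_cancel_left₀ ha.ne']
  rw [mul_assoc, rpow_one_div_mul_rpow_neg_one_div_mul_rpow_one_div (by positivity) hn₀.le hlog.le]
  refine (measure_pi_lt_coveringRadius_le_of_ofReal_le ha hball ⟨by positivity, htr⟩).trans_eq ?_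
  rw [Fintype.card_fin, hmass, mul_div_cancel₀ _ hn₀.ne', Real.exp_neg, Real.exp_log hn₀]
  congr 1
  field_simp

/-- for i.i.d. samples from a nicely behaving distribution on a compact set
satisfying the interior cone condition, the fill distance satisfies
`h_n = O_P(n^{-1/d} (log n)^{1/d})`: for every `ρ ∈ (0,1)` there exist `K_h > 0` and `N_h`
such that for all `n ≥ N_h`, `P(h_n > 2 K_h n^{-1/d} (log n)^{1/d}) ≤ ρ`. -/
theorem fillDist_rate {d : ℕ} (hd : 0 < d)
    (Ω : Set (EuclideanSpace ℝ (Fin d))) (hΩ : IsCompact Ω)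
    (hcone : InteriorConeCondition Ω)
    (μ : Measure (EuclideanSpace ℝ (Fin d))) [IsProbabilityMeasure μ]
    (hμ : NicelyBehaving Ω μ) :
    ∀ ρ ∈ Set.Ioo (0 : ℝ) 1, ∃ Kh : ℝ, 0 < Kh ∧ ∃ Nh : ℕ, ∀ n : ℕ, Nh ≤ n →
      (Measure.pi fun _ : Fin n => μ)
        {X | 2 * Kh * ((n : ℝ) ^ ((-1 : ℝ) / d) * Real.log n ^ ((1 : ℝ) / d)) < fillDist Ω X}
        ≤ ENNReal.ofReal ρ := by
  obtain ⟨K, hK, hlim⟩ := fillDist_rate_general (Nat.cast_pos.2 hd)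
    (hμ.lowerAhlforsRegular hcone hΩ.measure_lt_top.ne)
  exact fun ρ hρ =>
    ⟨K, hK, eventually_atTop.1 (hlim.eventually_le_const (ENNReal.ofReal_pos.2 hρ.1))⟩
end

section
/- Let Ω ⊂ ℝ^d be a compact set satisfying the interior cone condition, let μ be a nicely behaving distribution on Ω, and let X_1,…,X_n be i.i.d. random points with law μ. Fix x ∈ Ω, a constant C_D > 0, and let D_n = B(x, R_n) with R_n = C_D (log n / n)^{1/d}. Let N_{D_n} = #{ i ∈ {1,…,n} : X_i ∈ D_n } be the number of sample points lying in D_n. Then there exist finite constants 0 < γ_1 ≤ γ_2, a constant c > 0, and an integer N_0 such that for all n ≥ N_0, P( γ_1 log n ≤ N_{D_n} ≤ γ_2 log n ) ≥ 1 − 2/n^c; in particular, P( γ_1 log n ≤ N_{D_n} ≤ γ_2 log n ) → 1 as n → ∞. -/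
open MeasureTheory Metric Filter
open scoped ENNReal RealInnerProductSpace

/-- Number of sample points of `X` lying in the set `D`. -/
noncomputable def countIn {d n : ℕ} (X : Fin n → EuclideanSpace ℝ (Fin d))
    (D : Set (EuclideanSpace ℝ (Fin d))) : ℕ :=
  Nat.card {i : Fin n // X i ∈ D}

/-! The number of sample points in `D` is a sum of independent indicators with mean `m = n μ(D)`,
so the Chernoff bounds with parameters `t = ± 1` confine it to
`[m (1 - e⁻¹) - s, m (e - 1) + s]` outside an event of probability at most `2 e⁻ˢ`.
The cone at `x` contains, for every small `R`, a ball of radius proportional to `R` inside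
`ball x R`; hence `μ (ball x R)` is of order `R ^ d`, the mean `m` for `D = ball x Rₙ` is of order
`log n`, and it remains to take `s` to be a small multiple of `log n`. -/

section Chernoff

open ProbabilityTheory

lemma natCard_mem_eq_sum_indicator {α ι : Type*} [Fintype ι] (A : ι → Set α) (ω : α) :
    (Nat.card {i // ω ∈ A i} : ℝ) = (∑ i, (A i).indicator fun _ => (1 : ℝ)) ω := by
  classical
  simp [Finset.sum_apply, Set.indicator_apply, Fintype.card_subtype]

variable {α ι : Type*} [MeasurableSpace α] {P : Measure α} {A : ι → Set α}

lemma integrable_exp_mul_natCard_mem [Finite ι] [IsFiniteMeasure P]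
    (hA : ∀ i, MeasurableSet (A i)) (t : ℝ) :
    Integrable (fun ω => Real.exp (t * Nat.card {i // ω ∈ A i})) P := by
  cases nonempty_fintype ι
  have hmeas : Measurable fun ω => (Nat.card {i // ω ∈ A i} : ℝ) := by
    simp_rw [natCard_mem_eq_sum_indicator, Finset.sum_apply]
    exact Finset.measurable_sum _ fun i _ => measurable_const.indicator (hA i)
  have hcard (ω : α) : (Nat.card {i // ω ∈ A i} : ℝ) ∈ Set.Icc 0 (Nat.card ι : ℝ) :=
    ⟨Nat.cast_nonneg _, Nat.cast_le.2 (Finite.card_subtype_le _)⟩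
  exact integrable_exp_mul_of_mem_Icc hmeas.aemeasurable (ae_of_all _ hcard)

variable [IsProbabilityMeasure P]

lemma mgf_indicator_one {B : Set α} (hB : MeasurableSet B) (t : ℝ) :
    mgf (B.indicator fun _ => (1 : ℝ)) P t = 1 + P.real B * (Real.exp t - 1) := by
  have hexp : (fun ω => Real.exp (t * B.indicator (fun _ => (1 : ℝ)) ω)) =
      fun ω => 1 + B.indicator (fun _ => Real.exp t - 1) ω := by
    ext ω
    by_cases hω : ω ∈ B <;> simp [hω]
  rw [mgf, hexp, integral_add (integrable_const _) ((integrable_const _).indicator hB),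
    integral_indicator_const _ hB]
  simp

variable [Fintype ι]

lemma mgf_natCard_mem_le (hA : ∀ i, MeasurableSet (A i)) (hindep : iIndepSet A P) (t : ℝ) :
    mgf (fun ω => (Nat.card {i // ω ∈ A i} : ℝ)) P t ≤
      Real.exp ((∑ i, P.real (A i)) * (Real.exp t - 1)) := by
  have hmeas (i : ι) : Measurable ((A i).indicator fun _ => (1 : ℝ)) :=
    measurable_const.indicator (hA i)
  simp_rw [natCard_mem_eq_sum_indicator]
  rw [hindep.iIndepFun_indicator.mgf_sum hmeas, Finset.sum_mul, Real.exp_sum]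
  refine Finset.prod_le_prod (fun _ _ => mgf_nonneg) fun i _ => ?_
  rw [mgf_indicator_one (hA i), add_comm]
  exact Real.add_one_le_exp _

lemma measureReal_natCard_mem_ge_le (hA : ∀ i, MeasurableSet (A i)) (hindep : iIndepSet A P)
    (s : ℝ) :
    P.real {ω | (∑ i, P.real (A i)) * (Real.exp 1 - 1) + s ≤ Nat.card {i // ω ∈ A i}} ≤
      Real.exp (-s) := by
  refine (measure_ge_le_exp_mul_mgf _ zero_le_one
    (integrable_exp_mul_natCard_mem hA 1)).trans ?_
  grw [mgf_natCard_mem_le hA hindep, ← Real.exp_add]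
  exact le_of_eq (by ring_nf)

lemma measureReal_natCard_mem_le_le (hA : ∀ i, MeasurableSet (A i)) (hindep : iIndepSet A P)
    (s : ℝ) :
    P.real {ω | (Nat.card {i // ω ∈ A i} : ℝ) ≤
      (∑ i, P.real (A i)) * (1 - Real.exp (-1)) - s} ≤ Real.exp (-s) := by
  refine (measure_le_le_exp_mul_mgf _ (by norm_num : (-1 : ℝ) ≤ 0)
    (integrable_exp_mul_natCard_mem hA (-1))).trans ?_
  grw [mgf_natCard_mem_le hA hindep, ← Real.exp_add]
  exact le_of_eq (by ring_nf)

lemma one_sub_le_measure_natCard_mem (hA : ∀ i, MeasurableSet (A i)) (hindep : iIndepSet A P)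
    (s : ℝ) :
    1 - ENNReal.ofReal (2 * Real.exp (-s)) ≤
      P {ω | (∑ i, P.real (A i)) * (1 - Real.exp (-1)) - s ≤ Nat.card {i // ω ∈ A i} ∧
        Nat.card {i // ω ∈ A i} ≤ (∑ i, P.real (A i)) * (Real.exp 1 - 1) + s} := by
  set S := {ω | (∑ i, P.real (A i)) * (1 - Real.exp (-1)) - s ≤ Nat.card {i // ω ∈ A i} ∧
    Nat.card {i // ω ∈ A i} ≤ (∑ i, P.real (A i)) * (Real.exp 1 - 1) + s} with hS
  have hcompl : P.real Sᶜ ≤ 2 * Real.exp (-s) := by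
    rw [two_mul]
    refine le_trans ((measureReal_mono fun ω hω => ?_).trans (measureReal_union_le _ _))
      (add_le_add (measureReal_natCard_mem_le_le hA hindep s)
        (measureReal_natCard_mem_ge_le hA hindep s))
    rw [hS, Set.mem_compl_iff, Set.mem_ofPred_eq, not_and_or, not_le, not_le] at hω
    exact hω.imp le_of_lt le_of_lt
  rw [tsub_le_iff_left]
  calc (1 : ℝ≥0∞) = P (Sᶜ ∪ S) := by rw [Set.compl_union_self, measure_univ]
    _ ≤ P Sᶜ + P S := measure_union_le _ _
    _ ≤ _ := by grw [← ofReal_measureReal, hcompl]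

end Chernoff

section Sample

open ProbabilityTheory

lemma iIndepSet_eval_mem_pi {ι : Type*} [Fintype ι] {E : ι → Type*} [∀ i, MeasurableSpace (E i)]
    {μ : ∀ i, Measure (E i)} [∀ i, IsProbabilityMeasure (μ i)] {D : ∀ i, Set (E i)}
    (hD : ∀ i, MeasurableSet (D i)) :
    iIndepSet (fun i => {X : ∀ i, E i | X i ∈ D i}) (Measure.pi μ) := by
  refine (iIndepSet_iff_meas_biInter fun i => measurable_pi_apply i (hD i)).2 fun S => ?_
  have hindep : iIndepFun (fun i (X : ∀ i, E i) => X i) (Measure.pi μ) :=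
    iIndepFun_pi fun _ => aemeasurable_id
  exact hindep.measure_inter_preimage_eq_mul S fun i _ => hD i

variable {E ι : Type*} [MeasurableSpace E] [Fintype ι] {μ : Measure E} [IsProbabilityMeasure μ]
  {D : Set E}

lemma one_sub_le_pi_natCard_mem (hD : MeasurableSet D) (s : ℝ) :
    1 - ENNReal.ofReal (2 * Real.exp (-s)) ≤ (Measure.pi fun _ : ι => μ)
      {X | Fintype.card ι * μ.real D * (1 - Real.exp (-1)) - s ≤ Nat.card {i // X i ∈ D} ∧
        Nat.card {i // X i ∈ D} ≤ Fintype.card ι * μ.real D * (Real.exp 1 - 1) + s} := by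
  have hmean : ∑ i, (Measure.pi fun _ : ι => μ).real {X | X i ∈ D} =
      Fintype.card ι * μ.real D := by
    have hcoord (i : ι) : (Measure.pi fun _ : ι => μ).real {X | X i ∈ D} = μ.real D :=
      (measurePreserving_eval (fun _ : ι => μ) i).measureReal_preimage hD.nullMeasurableSet
    simp [hcoord]
  rw [← hmean]
  exact one_sub_le_measure_natCard_mem (fun i => measurable_pi_apply i hD)
    (iIndepSet_eval_mem_pi fun _ => hD) s

end Sample

section Regularity

variable {E : Type*} [PseudoMetricSpace E] [MeasurableSpace E]

/-- Ahlfors `s`-regularity of `μ` at the single point `x`: the balls of small radius `R` around `x`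
have measure of order `R ^ s`. The constants are extended reals so that the notion is stable
under scaling of `μ`; `a = ∞` is impossible when `μ` is finite. -/
def IsAhlforsRegularAt (μ : Measure E) (x : E) (s : ℝ) : Prop :=
  ∃ a b : ℝ≥0∞, a ≠ 0 ∧ b ≠ ∞ ∧ ∀ᶠ R : ℝ in nhdsWithin 0 (Set.Ioi 0),
    a * ENNReal.ofReal (R ^ s) ≤ μ (ball x R) ∧ μ (ball x R) ≤ b * ENNReal.ofReal (R ^ s)

/-- The radius `Rₙ = C (log n / n) ^ (1 / s)` for which a ball of an `s`-regular probability
measure is expected to contain of order `log n` of `n` sample points. -/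
noncomputable def shrinkingRadius (C s : ℝ) (n : ℕ) : ℝ :=
  C * (Real.log n / n) ^ (1 / s)

variable {μ ν : Measure E} {x : E} {C s : ℝ}

lemma IsAhlforsRegularAt.of_smul_le_of_le_smul {k K : ℝ≥0∞} (hν : IsAhlforsRegularAt ν x s)
    (hk : k ≠ 0) (hK : K ≠ ∞) (hkμ : k • ν ≤ μ) (hμK : μ ≤ K • ν) :
    IsAhlforsRegularAt μ x s := by
  obtain ⟨a, b, ha, hb, hab⟩ := hν
  refine ⟨k * a, K * b, mul_ne_zero hk ha, ENNReal.mul_ne_top hK hb, hab.mono fun R hR => ?_⟩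
  rw [mul_assoc, mul_assoc]
  constructor
  · grw [hR.1]
    exact hkμ _
  · grw [← hR.2]
    exact hμK _

lemma IsAhlforsRegularAt.exists_measureReal_ball_bounds [IsFiniteMeasure μ]
    (hμ : IsAhlforsRegularAt μ x s) :
    ∃ a b : ℝ, 0 < a ∧ 0 ≤ b ∧ ∀ᶠ R : ℝ in nhdsWithin 0 (Set.Ioi 0),
      a * R ^ s ≤ μ.real (ball x R) ∧ μ.real (ball x R) ≤ b * R ^ s := by
  obtain ⟨a, b, ha, hb, hab⟩ := hμ
  have ha_top : a ≠ ∞ := by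
    rintro rfl
    obtain ⟨R, hR, hR0⟩ := (hab.and self_mem_nhdsWithin).exists
    have hpos : ENNReal.ofReal (R ^ s) ≠ 0 := by simpa using Real.rpow_pos_of_pos hR0 s
    exact measure_ne_top μ (ball x R) (top_le_iff.1 (by simpa [ENNReal.top_mul hpos] using hR.1))
  refine ⟨a.toReal, b.toReal, ENNReal.toReal_pos ha ha_top, ENNReal.toReal_nonneg, ?_⟩
  filter_upwards [hab, self_mem_nhdsWithin] with R hR hR0
  have hRs : (ENNReal.ofReal (R ^ s)).toReal = R ^ s :=
    ENNReal.toReal_ofReal (Real.rpow_nonneg (le_of_lt hR0) s)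
  rw [← hRs, ← ENNReal.toReal_mul, ← ENNReal.toReal_mul]
  exact ⟨ENNReal.toReal_mono (measure_ne_top μ _) hR.1,
    ENNReal.toReal_mono (ENNReal.mul_ne_top hb ENNReal.ofReal_ne_top) hR.2⟩

lemma eventually_log_div_self_pos : ∀ᶠ n : ℕ in atTop, 0 < Real.log n / n := by
  filter_upwards [eventually_gt_atTop 1] with n hn
  have hn' : (1 : ℝ) < n := Nat.one_lt_cast.2 hn
  exact div_pos (Real.log_pos hn') (zero_lt_one.trans hn')

lemma tendsto_shrinkingRadius (hC : 0 < C) (hs : 0 < s) :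
    Tendsto (shrinkingRadius C s) atTop (nhdsWithin 0 (Set.Ioi 0)) := by
  refine tendsto_nhdsWithin_iff.2 ⟨?_, ?_⟩
  · have hlog : Tendsto (fun n : ℕ => Real.log n / n) atTop (nhds 0) :=
      Real.isLittleO_log_id_atTop.tendsto_div_nhds_zero.comp tendsto_natCast_atTop_atTop
    have hs' : 0 < 1 / s := one_div_pos.2 hs
    have hpow := (hlog.rpow_const (Or.inr hs'.le)).const_mul C
    rwa [Real.zero_rpow hs'.ne', mul_zero] at hpow
  · filter_upwards [eventually_log_div_self_pos] with n hn
    exact mul_pos hC (Real.rpow_pos_of_pos hn _)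

lemma natCast_mul_shrinkingRadius_rpow (hC : 0 ≤ C) (hs : s ≠ 0) {n : ℕ} (hn : n ≠ 0) :
    n * shrinkingRadius C s n ^ s = C ^ s * Real.log n := by
  have hn' : (n : ℝ) ≠ 0 := Nat.cast_ne_zero.2 hn
  have hlog : 0 ≤ Real.log n / n := div_nonneg (Real.log_natCast_nonneg n) n.cast_nonneg
  rw [shrinkingRadius, Real.mul_rpow hC (Real.rpow_nonneg hlog _), one_div,
    Real.rpow_inv_rpow hlog hs]
  field_simp

lemma IsAhlforsRegularAt.exists_mean_bounds [IsFiniteMeasure μ] (hμ : IsAhlforsRegularAt μ x s)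
    (hC : 0 < C) (hs : 0 < s) :
    ∃ a b : ℝ, 0 < a ∧ 0 ≤ b ∧ ∀ᶠ n : ℕ in atTop,
      a * Real.log n ≤ n * μ.real (ball x (shrinkingRadius C s n)) ∧
        n * μ.real (ball x (shrinkingRadius C s n)) ≤ b * Real.log n := by
  obtain ⟨a, b, ha, hb, hab⟩ := hμ.exists_measureReal_ball_bounds
  refine ⟨a * C ^ s, b * C ^ s, by positivity, by positivity, ?_⟩
  filter_upwards [(tendsto_shrinkingRadius hC hs).eventually hab, eventually_ne_atTop 0]
    with n hn hn0
  simp only [mul_assoc, ← natCast_mul_shrinkingRadius_rpow hC.le hs.ne' hn0]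
  constructor
  · grw [← hn.1, mul_left_comm]
  · grw [hn.2, mul_left_comm]

end Regularity

lemma tendsto_one_of_one_sub_ofReal_le {ι : Type*} {l : Filter ι} {p : ι → ℝ≥0∞} {δ : ι → ℝ}
    (hδ : Tendsto δ l (nhds 0)) (hle : ∀ᶠ i in l, 1 - ENNReal.ofReal (δ i) ≤ p i)
    (hp : ∀ i, p i ≤ 1) : Tendsto p l (nhds 1) := by
  have hlower : Tendsto (fun i => 1 - ENNReal.ofReal (δ i)) l (nhds 1) := by
    simpa using ENNReal.Tendsto.sub tendsto_const_nhds (ENNReal.tendsto_ofReal hδ)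
      (Or.inl ENNReal.one_ne_top)
  exact tendsto_of_tendsto_of_tendsto_of_le_of_le' hlower tendsto_const_nhds hle
    (Eventually.of_forall hp)

lemma two_mul_exp_neg_mul_log (c : ℝ) {n : ℕ} (hn : n ≠ 0) :
    2 * Real.exp (-(c * Real.log n)) = 2 / (n : ℝ) ^ c := by
  rw [Real.exp_neg, mul_comm c, Real.exp_mul, Real.exp_log (by positivity), div_eq_mul_inv]

section Concentration

variable {E : Type*} [PseudoMetricSpace E] [MeasurableSpace E] [OpensMeasurableSpace E]
  {μ : Measure E} [IsProbabilityMeasure μ] {x : E} {C s : ℝ}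

lemma IsAhlforsRegularAt.exists_eventually_one_sub_le (hμ : IsAhlforsRegularAt μ x s)
    (hC : 0 < C) (hs : 0 < s) :
    ∃ γ₁ γ₂ c : ℝ, 0 < γ₁ ∧ γ₁ ≤ γ₂ ∧ 0 < c ∧ ∀ᶠ n : ℕ in atTop,
      1 - ENNReal.ofReal (2 / (n : ℝ) ^ c) ≤ (Measure.pi fun _ : Fin n => μ)
        {X | γ₁ * Real.log n ≤ (Nat.card {i // X i ∈ ball x (shrinkingRadius C s n)} : ℝ) ∧
          (Nat.card {i // X i ∈ ball x (shrinkingRadius C s n)} : ℝ) ≤ γ₂ * Real.log n} := by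
  obtain ⟨a, b, ha, hb, hab⟩ := hμ.exists_mean_bounds hC hs
  have hlo : 0 < 1 - Real.exp (-1) := sub_pos.2 (Real.exp_lt_one_iff.2 (by norm_num))
  have hup : 0 < Real.exp 1 - 1 := sub_pos.2 (Real.one_lt_exp_iff.2 one_pos)
  set c := a * (1 - Real.exp (-1)) / 2 with hc
  refine ⟨c, b * (Real.exp 1 - 1) + c, c, by positivity, le_add_of_nonneg_left (by positivity),
    by positivity, ?_⟩
  filter_upwards [hab, eventually_ne_atTop 0] with n ⟨hmean_ge, hmean_le⟩ hn
  rw [← two_mul_exp_neg_mul_log c hn]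
  refine (one_sub_le_pi_natCard_mem (D := ball x (shrinkingRadius C s n))
    measurableSet_ball _).trans (measure_mono fun X hX => ?_)
  rw [Set.mem_ofPred_eq, Fintype.card_fin] at hX
  constructor
  · calc c * Real.log n = a * Real.log n * (1 - Real.exp (-1)) - c * Real.log n := by rw [hc]; ring
      _ ≤ _ := by grw [hmean_ge]
      _ ≤ _ := hX.1
  · calc _ ≤ _ := hX.2
      _ ≤ b * Real.log n * (Real.exp 1 - 1) + c * Real.log n := by grw [hmean_le]
      _ = _ := by ring

theorem count_in_shrinking_ball_general (hμ : IsAhlforsRegularAt μ x s)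
    (hC : 0 < C) (hs : 0 < s) :
    ∃ γ₁ γ₂ c : ℝ, 0 < γ₁ ∧ γ₁ ≤ γ₂ ∧ 0 < c ∧ ∃ N₀ : ℕ,
      (∀ n : ℕ, N₀ ≤ n →
        1 - ENNReal.ofReal (2 / (n : ℝ) ^ c) ≤ (Measure.pi fun _ : Fin n => μ)
          {X | γ₁ * Real.log n ≤ (Nat.card {i // X i ∈ ball x (shrinkingRadius C s n)} : ℝ) ∧
            (Nat.card {i // X i ∈ ball x (shrinkingRadius C s n)} : ℝ) ≤ γ₂ * Real.log n}) ∧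
      Tendsto (fun n : ℕ => (Measure.pi fun _ : Fin n => μ)
          {X | γ₁ * Real.log n ≤ (Nat.card {i // X i ∈ ball x (shrinkingRadius C s n)} : ℝ) ∧
            (Nat.card {i // X i ∈ ball x (shrinkingRadius C s n)} : ℝ) ≤ γ₂ * Real.log n})
        atTop (nhds 1) := by
  obtain ⟨γ₁, γ₂, c, hγ₁, hγ, hc, hbound⟩ := hμ.exists_eventually_one_sub_le hC hs
  have hδ : Tendsto (fun n : ℕ => 2 / (n : ℝ) ^ c) atTop (nhds 0) :=
    ((tendsto_rpow_atTop hc).comp tendsto_natCast_atTop_atTop).const_div_atTop 2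
  exact ⟨γ₁, γ₂, c, hγ₁, hγ, hc, (eventually_atTop.1 hbound).imp fun N₀ hN₀ =>
    ⟨hN₀, tendsto_one_of_one_sub_ofReal_le hδ hbound fun _ => prob_le_one⟩⟩

end Concentration

section Cone

variable {E : Type*} [NormedAddCommGroup E] [InnerProductSpace ℝ E] {x ξ : E} {θ r : ℝ}

/-- The solid cone `C(x, ξ, θ, r)` with apex `x`, axis `ξ`, half-angle `θ` and radius `r`, written
as in `InteriorConeCondition`. -/
def solidCone (x ξ : E) (θ r : ℝ) : Set E :=
  {p | ∃ y : E, ‖y‖ = 1 ∧ Real.cos θ ≤ ⟪y, ξ⟫ ∧ ∃ l : ℝ, l ∈ Set.Icc 0 r ∧ p = x + l • y}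

lemma add_mem_solidCone {v : E} (hv : v ≠ 0) (hvr : ‖v‖ ≤ r)
    (hvξ : Real.cos θ * ‖v‖ ≤ ⟪v, ξ⟫) : x + v ∈ solidCone x ξ θ r := by
  have hv' : 0 < ‖v‖ := norm_pos_iff.2 hv
  refine ⟨‖v‖⁻¹ • v, by simp [norm_smul, hv'.ne'], ?_, ‖v‖, ⟨hv'.le, hvr⟩, ?_⟩
  · rwa [real_inner_smul_left, inv_mul_eq_div, le_div_iff₀ hv']
  · rw [smul_inv_smul₀ hv'.ne']

lemma ball_subset_solidCone_inter_ball (hξ : ‖ξ‖ = 1) {R : ℝ} (hR : 0 < R) (hRr : R ≤ r) :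
    ball (x + (R / 2) • ξ) ((1 - Real.cos θ) / 8 * R) ⊆ solidCone x ξ θ r ∩ ball x R := by
  intro p hp
  obtain ⟨w, rfl⟩ : ∃ w, p = x + ((R / 2) • ξ + w) := ⟨p - (x + (R / 2) • ξ), by abel⟩
  have hw : ‖w‖ < (1 - Real.cos θ) / 8 * R := by simpa [dist_eq_norm, ← add_assoc] using hp
  have hw4 : ‖w‖ < R / 4 := by nlinarith [Real.neg_one_le_cos θ]
  set v := (R / 2) • ξ + w with hv
  have haxis : ‖(R / 2) • ξ‖ = R / 2 := by
    rw [norm_smul, hξ, mul_one, Real.norm_of_nonneg (by positivity)]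
  have hv_le : ‖v‖ ≤ R / 2 + ‖w‖ := haxis ▸ norm_add_le _ _
  have hv_ge : R / 2 - ‖w‖ ≤ ‖v‖ := haxis ▸ norm_sub_le_norm_add _ _
  have hinner : R / 2 - ‖w‖ ≤ ⟪v, ξ⟫ := by
    have hwξ : -‖w‖ ≤ ⟪w, ξ⟫ := by simpa [hξ] using neg_le_of_abs_le (abs_real_inner_le_norm w ξ)
    rw [hv, inner_add_left, real_inner_smul_left, real_inner_self_eq_norm_sq, hξ]
    linarith
  refine ⟨add_mem_solidCone (norm_pos_iff.1 (by linarith)) (by linarith) ?_, ?_⟩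
  · have hgap : 2 * ‖w‖ ≤ (1 - Real.cos θ) * ‖v‖ := by
      nlinarith [mul_le_mul_of_nonneg_left (show R / 4 ≤ ‖v‖ by linarith)
        (sub_nonneg.2 (Real.cos_le_one θ))]
    linarith
  · rw [mem_ball, dist_self_add_left]
    linarith

lemma isAhlforsRegularAt_restrict_of_solidCone_subset [FiniteDimensional ℝ E] [MeasurableSpace E]
    [BorelSpace E] (ν : Measure E) [ν.IsAddHaarMeasure] {Ω : Set E} (hξ : ‖ξ‖ = 1)
    (hθ : Real.cos θ < 1) (hr : 0 < r) (hΩ : solidCone x ξ θ r ⊆ Ω) :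
    IsAhlforsRegularAt (ν.restrict Ω) x (Module.finrank ℝ E) := by
  have hκ : 0 < (1 - Real.cos θ) / 8 := by linarith
  refine ⟨ENNReal.ofReal (((1 - Real.cos θ) / 8) ^ Module.finrank ℝ E) * ν (ball 0 1),
    ν (ball 0 1), mul_ne_zero (by simpa using pow_pos hκ _) (measure_ball_pos _ _ one_pos).ne',
    measure_ball_lt_top.ne, ?_⟩
  filter_upwards [Ioc_mem_nhdsGT hr] with R ⟨hR, hRr⟩
  rw [Measure.restrict_apply measurableSet_ball, Real.rpow_natCast]
  constructor
  · calc _ = ν (ball (x + (R / 2) • ξ) ((1 - Real.cos θ) / 8 * R)) := by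
          rw [ν.addHaar_ball_of_pos _ (mul_pos hκ hR), mul_pow, ENNReal.ofReal_mul (by positivity)]
          ring
      _ ≤ ν (ball x R ∩ Ω) := measure_mono fun p hp =>
          have hp' := ball_subset_solidCone_inter_ball hξ hR hRr hp
          ⟨hp'.2, hΩ hp'.1⟩
  · calc ν (ball x R ∩ Ω) ≤ ν (ball x R) := measure_mono Set.inter_subset_left
      _ = _ := by rw [ν.addHaar_ball_of_pos _ hR, mul_comm]

end Cone

section Domain

variable {d : ℕ} {Ω : Set (EuclideanSpace ℝ (Fin d))} {μ : Measure (EuclideanSpace ℝ (Fin d))}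
  {x : EuclideanSpace ℝ (Fin d)}

lemma InteriorConeCondition.isAhlforsRegularAt_restrict (hΩ : InteriorConeCondition Ω)
    (hx : x ∈ Ω) : IsAhlforsRegularAt (volume.restrict Ω) x d := by
  obtain ⟨θ, ⟨hθ₀, hθ₁⟩, r, hr, hcone⟩ := hΩ
  obtain ⟨ξ, hξ, hsub⟩ := hcone x hx
  have hθ : Real.cos θ < 1 := by
    simpa using Real.cos_lt_cos_of_nonneg_of_le_pi_div_two le_rfl hθ₁.le hθ₀
  simpa using isAhlforsRegularAt_restrict_of_solidCone_subset volume hξ hθ hr hsub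

lemma NicelyBehaving.uniformMeasure_ne_zero (hμ : NicelyBehaving Ω μ) : uniformMeasure Ω ≠ 0 := by
  obtain ⟨_, _, C, -, -, -, -, hμC⟩ := hμ
  intro h
  rw [h, smul_zero] at hμC
  exact IsProbabilityMeasure.ne_zero μ (le_antisymm hμC (Measure.zero_le μ))

lemma NicelyBehaving.isAhlforsRegularAt {s : ℝ} (hμ : NicelyBehaving Ω μ)
    (hΩ : IsAhlforsRegularAt (volume.restrict Ω) x s) : IsAhlforsRegularAt μ x s := by
  have hν := hμ.uniformMeasure_ne_zero
  obtain ⟨-, c, C, hc, -, hC, hcμ, hμC⟩ := hμ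
  have hvol_inv : (volume Ω)⁻¹ ≠ 0 := fun h => hν (by rw [uniformMeasure, h, zero_smul])
  have hvol : volume Ω ≠ 0 := fun h => hν (by
    rw [uniformMeasure, Measure.restrict_eq_zero.2 h, smul_zero])
  rw [uniformMeasure, smul_smul] at hcμ hμC
  exact hΩ.of_smul_le_of_le_smul (mul_ne_zero hc.ne' hvol_inv)
    (ENNReal.mul_ne_top hC.ne (ENNReal.inv_ne_top.2 hvol)) hcμ hμC

end Domain

/-- with `D_n = B(x, C_D (log n / n)^{1/d})`, the number of sample points in
`D_n` is between `γ₁ log n` and `γ₂ log n` with probability at least `1 − 2/n^c`; in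
particular this probability tends to `1`. -/
theorem count_in_shrinking_ball {d : ℕ} (hd : 0 < d)
    (Ω : Set (EuclideanSpace ℝ (Fin d))) (hΩ : IsCompact Ω)
    (hcone : InteriorConeCondition Ω)
    (μ : Measure (EuclideanSpace ℝ (Fin d))) [IsProbabilityMeasure μ]
    (hμ : NicelyBehaving Ω μ)
    (x : EuclideanSpace ℝ (Fin d)) (hx : x ∈ Ω)
    (CD : ℝ) (hCD : 0 < CD) :
    ∃ γ₁ γ₂ c : ℝ, 0 < γ₁ ∧ γ₁ ≤ γ₂ ∧ 0 < c ∧ ∃ N₀ : ℕ,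
      (∀ n : ℕ, N₀ ≤ n →
        1 - ENNReal.ofReal (2 / (n : ℝ) ^ c) ≤
          (Measure.pi fun _ : Fin n => μ)
            {X | γ₁ * Real.log n ≤
                  (countIn X (ball x (CD * (Real.log n / n) ^ ((1 : ℝ) / d))) : ℝ) ∧
                (countIn X (ball x (CD * (Real.log n / n) ^ ((1 : ℝ) / d))) : ℝ) ≤
                  γ₂ * Real.log n}) ∧
      Tendsto (fun n : ℕ =>
          (Measure.pi fun _ : Fin n => μ)
            {X | γ₁ * Real.log n ≤
                  (countIn X (ball x (CD * (Real.log n / n) ^ ((1 : ℝ) / d))) : ℝ) ∧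
                (countIn X (ball x (CD * (Real.log n / n) ^ ((1 : ℝ) / d))) : ℝ) ≤
                  γ₂ * Real.log n})
        atTop (nhds 1) :=
  count_in_shrinking_ball_general
    (hμ.isAhlforsRegularAt (hcone.isAhlforsRegularAt_restrict hx)) hCD (Nat.cast_pos.2 hd)
end
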